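/- arXiv:2001.03971 — 2 statements merged into one kernel-verified Lean document; each statement's English description precedes it below -/
import Mathlib

section
/- Let X be an MV-algebra and let x₁, x₂ be Boolean elements with x₁ ∨ x₂ = 1 and x₁ ∧ x₂ = 0. Then X is isomorphic as an MV-algebra to the product (-∞, x₁] × (-∞, x₂], via the map z ↦ (z ∧ x₁, z ∧ x₂). -/
/-- An MV-algebra: an abelian monoid `(X, add, zero)` with a unary `neg` satisfying
`x ⊕ ¬0 = ¬0`, `¬¬x = x`, and `¬(¬x ⊕ y) ⊕ y = ¬(¬y ⊕ x) ⊕ x`. -/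
structure MVAlg (X : Type) where
  add : X → X → X
  zero : X
  neg : X → X
  add_assoc : ∀ a b c : X, add (add a b) c = add a (add b c)
  add_comm : ∀ a b : X, add a b = add b a
  zero_add : ∀ a : X, add zero a = a
  add_neg_zero : ∀ a : X, add a (neg zero) = neg zero
  neg_neg : ∀ a : X, neg (neg a) = a
  lukasiewicz : ∀ a b : X, add (neg (add (neg a) b)) b = add (neg (add (neg b) a)) a

namespace MVAlg

variable {X : Type}

/-- `1 = ¬0`. -/
def one (M : MVAlg X) : X := M.neg M.zero

/-- `x ⊙ y = ¬(¬x ⊕ ¬y)`. -/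
def mul (M : MVAlg X) (x y : X) : X := M.neg (M.add (M.neg x) (M.neg y))

/-- `x ∨ y = ¬(¬x ⊕ y) ⊕ y`. -/
def sup (M : MVAlg X) (x y : X) : X := M.add (M.neg (M.add (M.neg x) y)) y

/-- `x ∧ y = x ⊙ (¬x ⊕ y)`. -/
def inf (M : MVAlg X) (x y : X) : X := M.mul x (M.add (M.neg x) y)

/-- `x ≤ y` iff `¬x ⊕ y = 1`. -/
def le (M : MVAlg X) (x y : X) : Prop := M.add (M.neg x) y = M.one

/-- The Fibonacci sequence attached to `x, y`: `u₀ = x`, `u₁ = y`, `u_{n+2} = u_n ⊕ u_{n+1}`. -/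
def fibSeq (M : MVAlg X) (x y : X) : ℕ → X
  | 0 => x
  | 1 => y
  | (n+2) => M.add (MVAlg.fibSeq M x y n) (MVAlg.fibSeq M x y (n+1))

/-- Scalar multiple: `0·z = 0`, `(k+1)·z = k·z ⊕ z`. -/
def smul (M : MVAlg X) : ℕ → X → X
  | 0, _ => M.zero
  | (k+1), z => M.add (MVAlg.smul M k z) z

end MVAlg

/-!
The hypotheses force `x₂ = ¬b` for `b = x₁`. For Boolean `b`, adding `b` is joining with `b`:
`w ⊕ b = w ∨ b`. In particular `b ∨ ¬b = 1`, so an element `u` is determined by `u ⊕ b` and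
`u ⊕ ¬b`, and an identity can be checked after adding `b` and after adding `¬b`. The element `z ∧ b`
is the one for which these sums are `b` and `z ⊕ ¬b`, which makes `z ↦ z ∧ b` additive and
`(p, q) ↦ p ⊕ q` inverse to `z ↦ (z ∧ b, z ∧ ¬b)`.
-/

namespace MVAlg

section Order

variable {X : Type} (M : MVAlg X) {a b c u v : X}

instance : Std.Associative M.add := ⟨M.add_assoc⟩

instance : Std.Commutative M.add := ⟨M.add_comm⟩

theorem add_one (a : X) : M.add a M.one = M.one :=
  M.add_neg_zero a

theorem one_add (a : X) : M.add M.one a = M.one := by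
  rw [M.add_comm, M.add_one]

theorem neg_one : M.neg M.one = M.zero :=
  M.neg_neg M.zero

theorem sup_comm (a b : X) : M.sup a b = M.sup b a :=
  M.lukasiewicz a b

theorem neg_add_self (a : X) : M.add (M.neg a) a = M.one := by
  have h : M.sup M.one a = M.one := by rw [M.sup_comm, sup, M.add_one]
  rwa [sup, M.neg_one, M.zero_add] at h

theorem sup_eq_right (h : M.le a b) : M.sup a b = b := by
  rw [le] at h
  rw [sup, h, M.neg_one, M.zero_add]

theorem le_antisymm (hab : M.le a b) (hba : M.le b a) : a = b := by
  rw [← M.sup_eq_right hba, M.sup_comm, M.sup_eq_right hab]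

theorem le_add_right (a b : X) : M.le a (M.add a b) := by
  rw [le, ← M.add_assoc, M.neg_add_self, M.one_add]

theorem le_add_left (a b : X) : M.le a (M.add b a) := by
  rw [M.add_comm]
  exact M.le_add_right a b

theorem le_iff_exists_add : M.le a b ↔ ∃ c, b = M.add a c := by
  constructor
  · intro h
    exact ⟨M.neg (M.add (M.neg b) a), by
      rw [M.add_comm, ← sup, M.sup_comm, M.sup_eq_right h]⟩
  · rintro ⟨c, rfl⟩
    exact M.le_add_right a c

theorem add_le_add_right (h : M.le a b) (c : X) : M.le (M.add a c) (M.add b c) := by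
  obtain ⟨d, rfl⟩ := M.le_iff_exists_add.mp h
  exact M.le_iff_exists_add.mpr ⟨d, by ac_rfl⟩

theorem neg_le_neg (h : M.le a b) : M.le (M.neg b) (M.neg a) := by
  rwa [le, M.neg_neg, M.add_comm]

theorem le_sup_right (a b : X) : M.le b (M.sup a b) :=
  M.le_add_left b _

theorem le_sup_left (a b : X) : M.le a (M.sup a b) := by
  rw [M.sup_comm]
  exact M.le_sup_right b a

theorem sup_le (hac : M.le a c) (hbc : M.le b c) : M.le (M.sup a b) c := by
  rw [← M.sup_eq_right hbc, M.sup_comm b c]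
  exact M.add_le_add_right (M.neg_le_neg (M.add_le_add_right (M.neg_le_neg hac) b)) b

theorem inf_eq_neg_sup_neg (a b : X) : M.inf a b = M.neg (M.sup (M.neg a) (M.neg b)) := by
  rw [M.sup_comm, inf, mul, sup, M.neg_neg, M.add_comm b, M.add_comm (M.neg a) (M.neg _)]

theorem inf_comm (a b : X) : M.inf a b = M.inf b a := by
  rw [M.inf_eq_neg_sup_neg, M.sup_comm, ← M.inf_eq_neg_sup_neg]

theorem inf_le_right (a b : X) : M.le (M.inf a b) b := by
  simpa only [M.inf_eq_neg_sup_neg, M.neg_neg] using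
    M.neg_le_neg (M.le_sup_right (M.neg a) (M.neg b))

theorem zero_inf (a : X) : M.inf M.zero a = M.zero := by
  rw [inf, mul, ← one, M.one_add, M.neg_one]

theorem le_neg_add_iff : M.le c (M.add (M.neg u) v) ↔ M.le u (M.add v (M.neg c)) := by
  rw [le, le, M.add_comm, M.add_assoc]

theorem le_of_sup_eq_one (h : M.sup a b = M.one) (ha : M.le u (M.add v (M.neg a)))
    (hb : M.le u (M.add v (M.neg b))) : M.le u v := by
  have one_le : M.le M.one (M.add (M.neg u) v) := by
    rw [← h]
    exact M.sup_le (M.le_neg_add_iff.mpr ha) (M.le_neg_add_iff.mpr hb)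
  rwa [le, M.neg_one, M.zero_add] at one_le

theorem neg_eq_of_sup_eq_one_of_inf_eq_zero (hsup : M.sup a b = M.one)
    (hinf : M.inf a b = M.zero) : M.neg a = b := by
  have add_le_right : M.le (M.add (M.neg a) b) b := hsup
  have add_le_left : M.le (M.add (M.neg a) b) (M.neg a) := by
    rw [inf, mul] at hinf
    rw [le, M.add_comm, ← M.neg_neg (M.add (M.neg a) _), hinf, one]
  exact (M.le_antisymm (M.le_add_right _ _) add_le_left).trans
    (M.le_antisymm add_le_right (M.le_add_left _ _))

end Order

/-- Boolean elements of an MV-algebra, encoded as the idempotents of `⊕`. -/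
def IsBoolean {X : Type} (M : MVAlg X) (b : X) : Prop :=
  M.add b b = b

namespace IsBoolean

variable {X : Type} {M : MVAlg X} {b p q u v : X}

theorem sup_eq_add (hb : M.IsBoolean b) (a : X) : M.sup a b = M.add a b := by
  apply M.le_antisymm
  · exact M.sup_le (M.le_add_right a b) (M.le_add_left b a)
  · have absorb : M.add (M.sup a b) b = M.sup a b := by rw [sup, M.add_assoc, hb]
    rw [← absorb]
    exact M.add_le_add_right (M.le_sup_left a b) b

theorem sup_neg_eq_one (hb : M.IsBoolean b) : M.sup b (M.neg b) = M.one := by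
  rw [M.sup_comm, hb.sup_eq_add, M.neg_add_self]

theorem neg (hb : M.IsBoolean b) : M.IsBoolean (M.neg b) :=
  -- `b ∨ ¬b = 1` unfolds to `¬b ⊕ ¬b ≤ ¬b`.
  M.le_antisymm hb.sup_neg_eq_one (M.le_add_right _ _)

theorem add_eq_right_of_le (hb : M.IsBoolean b) (h : M.le p b) : M.add p b = b := by
  rw [← hb.sup_eq_add, M.sup_eq_right h]

theorem inf_eq_mul (hb : M.IsBoolean b) (a : X) : M.inf a b = M.mul a b := by
  rw [M.inf_eq_neg_sup_neg, hb.neg.sup_eq_add, mul]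

theorem inf_add_self (hb : M.IsBoolean b) (a : X) : M.add (M.inf a b) b = b :=
  hb.add_eq_right_of_le (M.inf_le_right a b)

theorem inf_add_neg (hb : M.IsBoolean b) (a : X) :
    M.add (M.inf a b) (M.neg b) = M.add a (M.neg b) := by
  rw [hb.inf_eq_mul, mul, ← sup, hb.neg.sup_eq_add]

theorem inf_neg_add (hb : M.IsBoolean b) (a : X) :
    M.add (M.inf a (M.neg b)) b = M.add a b := by
  simpa only [M.neg_neg] using hb.neg.inf_add_neg a

theorem eq_of_add_eq_add (hb : M.IsBoolean b) (h : M.add u b = M.add v b)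
    (hneg : M.add u (M.neg b) = M.add v (M.neg b)) : u = v := by
  have le_of_eqs {u v : X} (h : M.add u b = M.add v b)
      (hneg : M.add u (M.neg b) = M.add v (M.neg b)) : M.le u v := by
    apply M.le_of_sup_eq_one hb.sup_neg_eq_one
    · rw [← hneg]
      exact M.le_add_right u _
    · rw [M.neg_neg, ← h]
      exact M.le_add_right u b
  exact M.le_antisymm (le_of_eqs h hneg) (le_of_eqs h.symm hneg.symm)

theorem add_inf_distrib_right (hb : M.IsBoolean b) (a c : X) :
    M.inf (M.add a c) b = M.add (M.inf a b) (M.inf c b) := by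
  apply hb.eq_of_add_eq_add
  · rw [hb.inf_add_self, M.add_assoc, hb.inf_add_self, hb.inf_add_self]
  · calc M.add (M.inf (M.add a c) b) (M.neg b)
        = M.add a (M.add c (M.neg b)) := by rw [hb.inf_add_neg, M.add_assoc]
      _ = M.add (M.add a (M.neg b)) (M.inf c b) := by rw [← hb.inf_add_neg c]; ac_rfl
      _ = M.add (M.add (M.inf a b) (M.inf c b)) (M.neg b) := by rw [← hb.inf_add_neg a]; ac_rfl

theorem neg_inf_eq_inf_neg_inf (hb : M.IsBoolean b) (a : X) :
    M.inf (M.neg a) b = M.inf b (M.neg (M.inf a b)) := by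
  rw [M.inf_comm b, hb.inf_eq_mul, hb.inf_eq_mul, mul, mul, M.neg_neg, M.neg_neg, hb.inf_add_neg]

theorem inf_add_inf_neg (hb : M.IsBoolean b) (a : X) :
    M.add (M.inf a b) (M.inf a (M.neg b)) = a := by
  apply hb.eq_of_add_eq_add
  · rw [M.add_comm (M.inf a b), M.add_assoc, hb.inf_add_self, hb.inf_neg_add]
  · rw [M.add_assoc, hb.neg.inf_add_self, hb.inf_add_neg]

theorem add_inf_eq_left (hb : M.IsBoolean b) (hp : M.le p b) (hq : M.le q (M.neg b)) :
    M.inf (M.add p q) b = p := by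
  apply hb.eq_of_add_eq_add
  · rw [hb.inf_add_self, hb.add_eq_right_of_le hp]
  · rw [hb.inf_add_neg, M.add_assoc, hb.neg.add_eq_right_of_le hq]

theorem add_inf_neg_eq_right (hb : M.IsBoolean b) (hp : M.le p b) (hq : M.le q (M.neg b)) :
    M.inf (M.add p q) (M.neg b) = q := by
  rw [M.add_comm]
  exact hb.neg.add_inf_eq_left hq (by rwa [M.neg_neg])

theorem range_inf_prod_inf_neg (hb : M.IsBoolean b) :
    Set.range (fun z => (M.inf z b, M.inf z (M.neg b))) =
      {p : X × X | M.le p.1 b ∧ M.le p.2 (M.neg b)} := by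
  ext ⟨p, q⟩
  constructor
  · rintro ⟨z, hz⟩
    obtain ⟨rfl, rfl⟩ := Prod.mk.inj hz
    exact ⟨M.inf_le_right z b, M.inf_le_right z (M.neg b)⟩
  · rintro ⟨hp, hq⟩
    exact ⟨M.add p q, Prod.ext (hb.add_inf_eq_left hp hq) (hb.add_inf_neg_eq_right hp hq)⟩

end IsBoolean

end MVAlg

theorem stmt_15 {X : Type} (M : MVAlg X) (x₁ x₂ : X)
    (h₁ : M.add x₁ x₁ = x₁) (h₂ : M.add x₂ x₂ = x₂)
    (hsup : M.sup x₁ x₂ = M.one) (hinf : M.inf x₁ x₂ = M.zero) :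
    ∃ φ : X → X × X,
      (∀ z : X, φ z = (M.inf z x₁, M.inf z x₂)) ∧
      Function.Injective φ ∧
      Set.range φ = {p : X × X | M.le p.1 x₁ ∧ M.le p.2 x₂} ∧
      (∀ z w : X, φ (M.add z w) = (M.add (φ z).1 (φ w).1, M.add (φ z).2 (φ w).2)) ∧
      (∀ z : X, φ (M.neg z) = (M.inf x₁ (M.neg (φ z).1), M.inf x₂ (M.neg (φ z).2))) ∧
      φ M.zero = (M.zero, M.zero) := by
  obtain rfl : M.neg x₁ = x₂ := M.neg_eq_of_sup_eq_one_of_inf_eq_zero hsup hinf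
  have hb₁ : M.IsBoolean x₁ := h₁
  have hb₂ : M.IsBoolean (M.neg x₁) := h₂
  refine ⟨fun z => (M.inf z x₁, M.inf z (M.neg x₁)), fun _ => rfl, ?injective,
    hb₁.range_inf_prod_inf_neg, ?map_add, ?map_neg, ?map_zero⟩
  case injective =>
    exact Function.LeftInverse.injective (g := fun p : X × X => M.add p.1 p.2) hb₁.inf_add_inf_neg
  case map_add =>
    exact fun z w => Prod.ext (hb₁.add_inf_distrib_right z w) (hb₂.add_inf_distrib_right z w)
  case map_neg =>
    exact fun z => Prod.ext (hb₁.neg_inf_eq_inf_neg_inf z) (hb₂.neg_inf_eq_inf_neg_inf z)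
  case map_zero => exact Prod.ext (M.zero_inf _) (M.zero_inf _)
end

section
/- In Chang's MV-algebra (equivalently, in the MV-algebra of the lexicographic group Z ×_lex Z with strong unit (1,0)), there exist elements x, y such that the Fibonacci sequence u₀ = x, u₁ = y, u_{n+2} = u_n ⊕ u_{n+1} is not eventually stationary. -/
/-- Lexicographic order on `ℤ × ℤ`. -/
def lexLe (p q : ℤ × ℤ) : Prop := p.1 < q.1 ∨ (p.1 = q.1 ∧ p.2 ≤ q.2)

open Classical

/-- Truncated addition on the interval `[(0,0),(1,0)]` of `ℤ ×_lex ℤ`: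
`x ⊕ y = min (x + y) (1,0)` in the lexicographic order. -/
noncomputable def changAdd (p q : ℤ × ℤ) : ℤ × ℤ :=
  if lexLe (p.1 + q.1, p.2 + q.2) (1, 0) then (p.1 + q.1, p.2 + q.2) else (1, 0)

/-- Fibonacci sequence for the truncated addition. -/
noncomputable def changFib (x y : ℤ × ℤ) : ℕ → ℤ × ℤ
  | 0 => x
  | 1 => y
  | (n + 2) => changAdd (changFib x y n) (changFib x y (n + 1))

/-! Addition is never truncated on the infinitesimals, the elements with first coordinate `0`: a sum
of two of them still has first coordinate `0 < 1`. A Fibonacci sequence of infinitesimals is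
therefore an honest Fibonacci sequence in the group `ℤ × ℤ`. If such a sequence is eventually equal
to `z`, then `z + z = z`, so `z = 0`, and running the recurrence backwards shows that it vanishes
from the start. Hence any two infinitesimals that are not both zero will do, such as `x = y = c`
for Chang's generator `c = (0, 1)`. -/

section FibonacciRecurrence

variable {M : Type*} [AddMonoid M] {u : ℕ → M}

theorem eq_zero_of_fib_rec_of_forall_ge_eq_zero (hu : ∀ n, u (n + 2) = u n + u (n + 1)) {k : ℕ}
    (hk : ∀ n ≥ k, u n = 0) : u = 0 := by
  induction k with
  | zero => exact funext fun n => hk n n.zero_le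
  | succ k ih =>
    have u_k : u k = 0 := by
      simpa only [hk (k + 1) le_rfl, hk (k + 2) (k + 1).le_succ, add_zero] using (hu k).symm
    refine ih fun n hn => ?_
    obtain rfl | hlt := hn.eq_or_lt
    · exact u_k
    · exact hk n hlt

theorem eq_zero_of_fib_rec_of_eventuallyConst [IsLeftCancelAdd M]
    (hu : ∀ n, u (n + 2) = u n + u (n + 1)) (hconst : Filter.EventuallyConst u Filter.atTop) :
    u = 0 := by
  obtain ⟨k, hk⟩ := Filter.eventuallyConst_atTop.mp hconst
  have u_k : u k = 0 := by
    have double : u k = u k + u k := by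
      simpa only [hk (k + 1) (by lia), hk (k + 2) (by lia)] using hu k
    exact left_eq_add.mp double
  exact eq_zero_of_fib_rec_of_forall_ge_eq_zero hu fun n hn => (hk n hn).trans u_k

end FibonacciRecurrence

section Infinitesimal

variable {x y : ℤ × ℤ}

theorem changAdd_eq_add_of_fst_eq_zero (hx : x.1 = 0) (hy : y.1 = 0) : changAdd x y = x + y :=
  if_pos (Or.inl (by simp [hx, hy]))

theorem changFib_fst_eq_zero (hx : x.1 = 0) (hy : y.1 = 0) : ∀ n, (changFib x y n).1 = 0
  | 0 => hx
  | 1 => hy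
  | n + 2 => by
    have h₀ := changFib_fst_eq_zero hx hy n
    have h₁ := changFib_fst_eq_zero hx hy (n + 1)
    rw [changFib, changAdd_eq_add_of_fst_eq_zero h₀ h₁, Prod.fst_add, h₀, h₁, add_zero]

theorem changFib_add_two_of_fst_eq_zero (hx : x.1 = 0) (hy : y.1 = 0) (n : ℕ) :
    changFib x y (n + 2) = changFib x y n + changFib x y (n + 1) :=
  changAdd_eq_add_of_fst_eq_zero (changFib_fst_eq_zero hx hy n) (changFib_fst_eq_zero hx hy (n + 1))

theorem eq_zero_of_eventuallyConst_changFib (hx : x.1 = 0) (hy : y.1 = 0)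
    (hconst : Filter.EventuallyConst (changFib x y) Filter.atTop) : x = 0 ∧ y = 0 := by
  have changFib_eq_zero : changFib x y = 0 :=
    eq_zero_of_fib_rec_of_eventuallyConst (changFib_add_two_of_fst_eq_zero hx hy) hconst
  exact ⟨congrFun changFib_eq_zero 0, congrFun changFib_eq_zero 1⟩

end Infinitesimal

theorem stmt_18 :
    ∃ x y : ℤ × ℤ,
      (lexLe (0, 0) x ∧ lexLe x (1, 0)) ∧
      (lexLe (0, 0) y ∧ lexLe y (1, 0)) ∧
      ¬ ∃ k : ℕ, ∀ n ≥ k, changFib x y n = changFib x y k := by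
  have c_mem : lexLe (0, 0) (0, 1) ∧ lexLe (0, 1) (1, 0) := by simp [lexLe]
  refine ⟨(0, 1), (0, 1), c_mem, c_mem, fun hstationary => ?_⟩
  have c_eq_zero : ((0, 1) : ℤ × ℤ) = 0 :=
    (eq_zero_of_eventuallyConst_changFib rfl rfl
      (Filter.eventuallyConst_atTop.mpr hstationary)).1
  exact absurd c_eq_zero (by decide)
end
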